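/- arXiv:2003.06138 — 2 statements merged into one kernel-verified Lean document; each statement's English description precedes it below -/
import Mathlib

section
/- Fix (x̄,ȳ) ∈ gph S at which S is inner semicontinuous. Assume that f and g₁,…,g_q are locally Lipschitz continuous and continuously differentiable with respect to y in a neighbourhood of (x̄,ȳ). Let I(x̄,ȳ) = { i ∈ {1,…,q} | g_i(x̄,ȳ) = 0 } and set ∇_y g₀(x,y) := ∇_y f(x,y) (the y-gradient of g₀(x,y) = f(x,y) − φ(x)). Assume there is a neighbourhood U ⊆ ℝⁿ×ℝᵐ of (x̄,ȳ) such that for each index set J ⊆ I(x̄,ȳ) ∪ {0}, the family of gradients (∇_y g_i(x,y))_{i∈J} has constant rank on U (i.e., the dimension of the span of { ∇_y g_i(x,y) | i ∈ J } is the same for all (x,y) ∈ U). Then the R-regularity constraint qualification (RRCQ) holds at (x̄,ȳ). -/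
open Filter Topology
open scoped ENNReal NNReal

/-- Optimal value function `φ(x) = inf { f(x,y) | g(x,y) ≤ 0 }`, an extended real. -/
noncomputable def phi {n m q : ℕ} (f : (Fin n → ℝ) → (Fin m → ℝ) → ℝ)
    (g : (Fin n → ℝ) → (Fin m → ℝ) → Fin q → ℝ) (x : Fin n → ℝ) : EReal :=
  sInf {v : EReal | ∃ y : Fin m → ℝ, (∀ i, g x y i ≤ 0) ∧ v = ((f x y : ℝ) : EReal)}

/-- Lower level solution set `S(x) = argmin_y { f(x,y) | g(x,y) ≤ 0 }`. -/
def Sol {n m q : ℕ} (f : (Fin n → ℝ) → (Fin m → ℝ) → ℝ)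
    (g : (Fin n → ℝ) → (Fin m → ℝ) → Fin q → ℝ) (x : Fin n → ℝ) : Set (Fin m → ℝ) :=
  {y | (∀ i, g x y i ≤ 0) ∧ ∀ z, (∀ i, g x z i ≤ 0) → f x y ≤ f x z}

/-- `(x̄,ȳ)` is a local minimizer of (BPP). -/
def IsLocalMinBPP {n m q : ℕ} (F : (Fin n → ℝ) → (Fin m → ℝ) → ℝ)
    (X : Set (Fin n → ℝ)) (f : (Fin n → ℝ) → (Fin m → ℝ) → ℝ)
    (g : (Fin n → ℝ) → (Fin m → ℝ) → Fin q → ℝ)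
    (xb : Fin n → ℝ) (yb : Fin m → ℝ) : Prop :=
  xb ∈ X ∧ yb ∈ Sol f g xb ∧
    ∃ ε : ℝ, 0 < ε ∧ ∀ x y, dist x xb < ε → dist y yb < ε → x ∈ X → y ∈ Sol f g x →
      F xb yb ≤ F x y

/-- (BPP) is partially calm at `(x̄,ȳ)`. -/
def PartiallyCalm {n m q : ℕ} (F : (Fin n → ℝ) → (Fin m → ℝ) → ℝ)
    (X : Set (Fin n → ℝ)) (f : (Fin n → ℝ) → (Fin m → ℝ) → ℝ)
    (g : (Fin n → ℝ) → (Fin m → ℝ) → Fin q → ℝ)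
    (xb : Fin n → ℝ) (yb : Fin m → ℝ) : Prop :=
  ∃ δ : ℝ, 0 < δ ∧ ∃ κ : ℝ, 0 < κ ∧ ∀ (x : Fin n → ℝ) (y : Fin m → ℝ) (u : ℝ),
    dist x xb ≤ δ → dist y yb ≤ δ → |u| ≤ δ → x ∈ X →
    ((f x y : ℝ) : EReal) - phi f g x ≤ ((u : ℝ) : EReal) → (∀ i, g x y i ≤ 0) →
    F xb yb ≤ F x y + κ * |u|

/-- The R-regularity constraint qualification (RRCQ) at `(x̄,ȳ) ∈ gph S`:
`dist(y,Φ(x)) ≤ κ·max{0, f(x,y) − φ(x), g₁(x,y), …, g_q(x,y)}` for all `(x,y)` near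
`(x̄,ȳ)` with `Φ(x) ≠ ∅` (note `Φ(x) = S(x)`, so that `φ(x)` is finite there). -/
def RRCQ {n m q : ℕ} (f : (Fin n → ℝ) → (Fin m → ℝ) → ℝ)
    (g : (Fin n → ℝ) → (Fin m → ℝ) → Fin q → ℝ)
    (xb : Fin n → ℝ) (yb : Fin m → ℝ) : Prop :=
  ∃ κ : ℝ, 0 < κ ∧ ∃ ε : ℝ, 0 < ε ∧ ∀ (x : Fin n → ℝ) (y : Fin m → ℝ),
    dist x xb < ε → dist y yb < ε → (Sol f g x).Nonempty →
    Metric.infDist y (Sol f g x) ≤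
      κ * max (max 0 (f x y - (phi f g x).toReal))
        (Finset.univ.fold max 0 fun i => g x y i)

/-- Inner semicontinuity of a set-valued map at a point of its graph. -/
def InnerSemicontinuous {n m : ℕ} (S : (Fin n → ℝ) → Set (Fin m → ℝ))
    (xb : Fin n → ℝ) (yb : Fin m → ℝ) : Prop :=
  ∀ x : ℕ → (Fin n → ℝ), Tendsto x atTop (𝓝 xb) →
    ∃ y : ℕ → (Fin m → ℝ), Tendsto y atTop (𝓝 yb) ∧
      ∀ᶠ k in atTop, y k ∈ S (x k)

/-- The `y`-gradient family indexed by `Option (Fin q)`, where `none` stands for the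
index `0`, i.e. the function `g₀(x,y) = f(x,y) − φ(x)` whose `y`-gradient is `∇_y f(x,y)`. -/
noncomputable def yGrad {n m q : ℕ} (f : (Fin n → ℝ) → (Fin m → ℝ) → ℝ)
    (g : (Fin n → ℝ) → (Fin m → ℝ) → Fin q → ℝ)
    (p : (Fin n → ℝ) × (Fin m → ℝ)) (io : Option (Fin q)) : (Fin m → ℝ) →L[ℝ] ℝ :=
  io.elim (fderiv ℝ (f p.1) p.2) (fun j => fderiv ℝ (fun y => g p.1 y j) p.2)

lemma aux_isc {n m : ℕ} (S : (Fin n → ℝ) → Set (Fin m → ℝ))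
    (xb : Fin n → ℝ) (yb : Fin m → ℝ) (h : InnerSemicontinuous S xb yb) (δ : ℝ) (hδ : 0 < δ) :
    ∀ᶠ x in 𝓝 xb, ∃ y ∈ S x, dist y yb < δ := by
  by_contra hc
  rw [Filter.not_eventually] at hc
  obtain ⟨x, hx, hx'⟩ := Filter.exists_seq_forall_of_frequently hc
  obtain ⟨y, hy, hy'⟩ := h x hx
  have h1 : ∀ᶠ k in atTop, dist (y k) yb < δ := by
    simpa using hy (Metric.ball_mem_nhds yb hδ)
  obtain ⟨k, hk1, hk2⟩ := (h1.and hy').exists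
  exact hx' k ⟨y k, hk2, hk1⟩

lemma aux_phi {n m q : ℕ} (f : (Fin n → ℝ) → (Fin m → ℝ) → ℝ)
    (g : (Fin n → ℝ) → (Fin m → ℝ) → Fin q → ℝ) (x : Fin n → ℝ) (y : Fin m → ℝ)
    (hy : y ∈ Sol f g x) : (phi f g x).toReal = f x y := by
  have : phi f g x = ((f x y : ℝ) : EReal) := by
    apply le_antisymm
    · exact sInf_le ⟨y, hy.1, rfl⟩
    · apply le_sInf
      rintro v ⟨z, hz, rfl⟩
      exact_mod_cast hy.2 z hz
  rw [this, EReal.toReal_coe]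

lemma aux_sqplus (t : ℝ) : HasDerivAt (fun s : ℝ => (max 0 s) ^ 2) (2 * max 0 t) t := by
  rw [hasDerivAt_iff_isLittleO]
  have h1 : (fun s : ℝ => (max 0 s) ^ 2 - (max 0 t) ^ 2 - (s - t) • (2 * max 0 t)) =O[𝓝 t]
      fun s => (s - t) ^ 2 := by
    apply Asymptotics.IsBigO.of_bound 1
    filter_upwards with s
    rw [Real.norm_eq_abs, Real.norm_eq_abs, abs_of_nonneg (sq_nonneg (s - t)), one_mul, abs_le,
      smul_eq_mul]
    rcases le_total 0 s with hs | hs <;> rcases le_total 0 t with ht | ht <;>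
      simp only [max_eq_left, max_eq_right, hs, ht] <;> constructor <;> nlinarith
  refine h1.trans_isLittleO ?_
  have h2 : (fun s : ℝ => s - t) =o[𝓝 t] (fun _ => (1 : ℝ)) := by
    rw [Asymptotics.isLittleO_one_iff]
    have : Tendsto (fun s : ℝ => s - t) (𝓝 t) (𝓝 (t - t)) := by
      apply Continuous.tendsto; fun_prop
    simpa using this
  have := h2.mul_isBigO (Asymptotics.isBigO_refl (fun s : ℝ => s - t) (𝓝 t))
  simpa [sq] using this

/-- conic Caratheodory -/
lemma aux_carath {ι F : Type*} [DecidableEq ι] [AddCommGroup F] [Module ℝ F] (a : ι → F) :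
    ∀ (s : Finset ι) (l : ι → ℝ), (∀ i ∈ s, 0 ≤ l i) →
    ∃ t ⊆ s, ∃ μ : ι → ℝ, (∀ i ∈ t, 0 ≤ μ i) ∧ LinearIndependent ℝ (fun i : t => a i) ∧
      ∑ i ∈ t, μ i • a i = ∑ i ∈ s, l i • a i := by
  intro s
  induction s using Finset.strongInduction with
  | H s ih =>
    intro l hl
    by_cases hli : LinearIndependent ℝ (fun i : s => a i)
    · exact ⟨s, subset_rfl, l, hl, hli, rfl⟩
    · have hex : ∃ c : ι → ℝ, ∑ i ∈ s, c i • a i = 0 ∧ ∃ i ∈ s, 0 < c i := by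
        rw [Fintype.linearIndependent_iff] at hli
        push Not at hli
        obtain ⟨c, hc, j, hj⟩ := hli
        let c' : ι → ℝ := fun i => if h : i ∈ s then c ⟨i, h⟩ else 0
        have hc' : ∑ i ∈ s, c' i • a i = 0 := by
          rw [← Finset.sum_coe_sort, ← hc]
          apply Finset.sum_congr rfl
          intro i _
          simp [c']
        have hj' : c' j = c j := by simp [c']
        rcases lt_or_gt_of_ne hj with h | h
        · refine ⟨fun i => - c' i, ?_, j, j.2, ?_⟩
          · simp [hc']
          · simp only [hj']; linarith
        · exact ⟨c', hc', j, j.2, by rw [hj']; exact h⟩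
      obtain ⟨c, hc, i0, hi0, hci0⟩ := hex
      obtain ⟨k, hk, hkmin⟩ := Finset.exists_min_image (s.filter fun i => 0 < c i)
        (fun i => l i / c i) ⟨i0, by simp [hi0, hci0]⟩
      simp only [Finset.mem_filter] at hk hkmin
      set θ := l k / c k with hθ
      have hθ0 : 0 ≤ θ := div_nonneg (hl k hk.1) hk.2.le
      have hnn : ∀ i ∈ s, 0 ≤ l i - θ * c i := by
        intro i hi
        by_cases hci : 0 < c i
        · have := hkmin i ⟨hi, hci⟩
          rw [le_div_iff₀ hci] at this
          linarith
        · have := hl i hi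
          nlinarith
      have hzero : l k - θ * c k = 0 := by
        rw [hθ]; field_simp [hk.2.ne']; ring
      obtain ⟨t, ht, μ, h1, h2, h3⟩ := ih (s.erase k) (Finset.erase_ssubset hk.1)
        (fun i => l i - θ * c i) (fun i hi => hnn i (Finset.mem_of_mem_erase hi))
      refine ⟨t, ht.trans (Finset.erase_subset _ _), μ, h1, h2, ?_⟩
      rw [h3, Finset.sum_erase _ (by rw [hzero, zero_smul])]
      simp only [sub_smul, mul_smul, Finset.sum_sub_distrib, ← Finset.smul_sum, hc]
      simp

lemma aux_bound1 {ι F : Type*} [NormedAddCommGroup F] [NormedSpace ℝ F]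
    (a : ι → F) (J : Finset ι) (hJ : LinearIndependent ℝ (fun i : J => a i)) :
    ∃ C : ℝ, 0 ≤ C ∧ ∀ l : ι → ℝ, ∑ i ∈ J, |l i| ≤ C * ‖∑ i ∈ J, l i • a i‖ := by
  let T : (J → ℝ) →ₗ[ℝ] F := Fintype.linearCombination ℝ (fun i : J => a i)
  have hT : LinearMap.ker T = ⊥ := by
    rw [LinearMap.ker_eq_bot]
    exact hJ.fintypeLinearCombination_injective
  obtain ⟨K, hK, hKT⟩ := T.exists_antilipschitzWith hT
  refine ⟨J.card * K, by positivity, fun l => ?_⟩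
  have h1 := hKT.le_mul_dist (fun i : J => l i) 0
  have h2 : T (fun i : J => l i) = ∑ i ∈ J, l i • a i := by
    simp only [T, Fintype.linearCombination_apply]
    exact Finset.sum_coe_sort J (fun i => l i • a i)
  rw [map_zero, dist_zero_right, dist_zero_right, h2] at h1
  calc ∑ i ∈ J, |l i| ≤ ∑ i ∈ J, (K * ‖∑ i ∈ J, l i • a i‖) := by
        apply Finset.sum_le_sum
        intro i hi
        exact (norm_le_pi_norm (fun i : J => l i) ⟨i, hi⟩).trans h1
    _ = _ := by rw [Finset.sum_const, nsmul_eq_mul]; ring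

lemma aux_bound2 {ι F : Type*} [Fintype ι] [NormedAddCommGroup F] [NormedSpace ℝ F]
    (a : ι → F) :
    ∃ C : ℝ, 0 < C ∧ ∀ J : Finset ι, LinearIndependent ℝ (fun i : J => a i) →
      ∀ l : ι → ℝ, ∑ i ∈ J, |l i| ≤ C * ‖∑ i ∈ J, l i • a i‖ := by
  have : ∀ J : Finset ι, ∃ C : ℝ, 0 ≤ C ∧ (LinearIndependent ℝ (fun i : J => a i) →
      ∀ l : ι → ℝ, ∑ i ∈ J, |l i| ≤ C * ‖∑ i ∈ J, l i • a i‖) := by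
    intro J
    by_cases hJ : LinearIndependent ℝ (fun i : J => a i)
    · obtain ⟨C, h0, h⟩ := aux_bound1 a J hJ
      exact ⟨C, h0, fun _ => h⟩
    · exact ⟨0, le_rfl, fun h => absurd h hJ⟩
  choose C hC0 hC using this
  refine ⟨∑ J, C J + 1, by have := Finset.sum_nonneg (fun J (_ : J ∈ Finset.univ) => hC0 J); linarith, fun J hJ l => (hC J hJ l).trans ?_⟩
  gcongr
  have := Finset.single_le_sum (fun J _ => hC0 J) (Finset.mem_univ J)
  linarith

lemma aux_bound3 {ι F : Type*} [NormedAddCommGroup F] [NormedSpace ℝ F]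
    (a b : ι → F) (J : Finset ι) (C δ : ℝ) (hC : 0 < C) (hδ : C * δ ≤ 1 / 2)
    (hab : ∀ i, ‖b i - a i‖ ≤ δ)
    (l : ι → ℝ) (h : ∑ i ∈ J, |l i| ≤ C * ‖∑ i ∈ J, l i • a i‖) :
    ∑ i ∈ J, |l i| ≤ (2 * C) * ‖∑ i ∈ J, l i • b i‖ := by
  have h1 : ‖∑ i ∈ J, l i • a i‖ ≤ ‖∑ i ∈ J, l i • b i‖ + δ * ∑ i ∈ J, |l i| := by
    have e : ∑ i ∈ J, l i • a i = ∑ i ∈ J, l i • b i - ∑ i ∈ J, l i • (b i - a i) := by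
      rw [← Finset.sum_sub_distrib]
      apply Finset.sum_congr rfl
      intro i _
      rw [smul_sub]; abel
    rw [e]
    refine (norm_sub_le _ _).trans ?_
    gcongr
    refine (norm_sum_le _ _).trans ?_
    rw [Finset.mul_sum]
    apply Finset.sum_le_sum
    intro i _
    rw [norm_smul, Real.norm_eq_abs, mul_comm]
    exact mul_le_mul_of_nonneg_right (hab i) (abs_nonneg _)
  have h2 : 0 ≤ ∑ i ∈ J, |l i| := Finset.sum_nonneg fun i _ => abs_nonneg _
  have h3 := mul_le_mul_of_nonneg_left h1 hC.le
  have h4 := mul_le_mul_of_nonneg_right hδ h2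
  nlinarith

/-- Core: estimate for one stationary point of the penalty problem. -/
lemma aux_core {m : ℕ} {ι : Type*} [Fintype ι] (h : ι → (Fin m → ℝ) → ℝ)
    (G : ι → (Fin m → ℝ) →L[ℝ] ℝ) (y w : Fin m → ℝ) (C η M ρ : ℝ) (hC : 0 < C)
    (hρ : 0 ≤ ρ) (hM : 0 ≤ M) (hη0 : 0 ≤ η)
    (hη : C * m * η ≤ 1 / 2)
    (hd : ∀ i, HasFDerivAt (h i) (G i) w)
    (hmin : IsLocalMin (fun w : Fin m → ℝ => ∑ j, (w j - y j) ^ 2 + ρ * ∑ i, (max 0 (h i w)) ^ 2) w)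
    (hLI : ∀ J : Finset ι, LinearIndependent ℝ (fun i : J => G i) →
      ∀ l : ι → ℝ, ∑ i ∈ J, |l i| ≤ C * ‖∑ i ∈ J, l i • G i‖)
    (hlin : ∀ i, |h i y - h i w - G i (y - w)| ≤ η * ‖y - w‖)
    (hy : ∀ i, h i y ≤ M) : ‖y - w‖ ≤ 2 * C * m * M := by
  classical
  let L : (Fin m → ℝ) →L[ℝ] ℝ := ∑ j, (y j - w j) • ContinuousLinearMap.proj (R := ℝ) (φ := fun _ : Fin m => ℝ) j
  have hLapp : ∀ u, L u = ∑ j, (y j - w j) * u j := by intro u; simp [L]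
  -- stationarity
  have hst : ∑ i, (ρ * max 0 (h i w)) • G i = L := by
    have hD1 : HasFDerivAt (fun w : Fin m → ℝ => ∑ j, (w j - y j) ^ 2)
        (∑ j, (2 * (w j - y j)) • ContinuousLinearMap.proj (R := ℝ) (φ := fun _ : Fin m => ℝ) j) w := by
      apply HasFDerivAt.fun_sum
      intro j _
      have h1 : HasFDerivAt (fun w : Fin m → ℝ => w j - y j)
        (ContinuousLinearMap.proj (R := ℝ) j : (Fin m → ℝ) →L[ℝ] ℝ) w := 
        (hasFDerivAt_apply j w).sub_const _
      have h2 := h1.pow 2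
      simpa using h2
    have hD2 : HasFDerivAt (fun w : Fin m → ℝ => ρ * ∑ i, (max 0 (h i w)) ^ 2)
        (ρ • ∑ i, (2 * max 0 (h i w)) • G i) w := by
      apply HasFDerivAt.const_mul
      apply HasFDerivAt.fun_sum
      intro i _
      exact (aux_sqplus (h i w)).comp_hasFDerivAt w (hd i)
    have hz := hmin.hasFDerivAt_eq_zero (hD1.add hD2)
    ext u
    have hzu := congrArg (fun T : (Fin m → ℝ) →L[ℝ] ℝ => T u) hz
    simp only [_root_.add_apply, _root_.smul_apply,
      _root_.sum_apply, ContinuousLinearMap.proj_apply, smul_eq_mul,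
      _root_.zero_apply] at hzu
    rw [hLapp]
    simp only [_root_.smul_apply, _root_.sum_apply, smul_eq_mul]
    have e1 : ∑ j, 2 * (w j - y j) * u j = -2 * ∑ j, (y j - w j) * u j := by
      rw [Finset.mul_sum]; exact Finset.sum_congr rfl fun j _ => by ring
    have e2 : ρ * ∑ i, 2 * max 0 (h i w) * G i u = 2 * ∑ i, ρ * max 0 (h i w) * G i u := by
      rw [Finset.mul_sum, Finset.mul_sum]; exact Finset.sum_congr rfl fun j _ => by ring
    rw [e1, e2] at hzu
    linarith
  have hst' : ∑ i ∈ Finset.univ.filter (fun i => 0 < h i w), (ρ * max 0 (h i w)) • G i = L := by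
    rw [← hst]
    apply Finset.sum_subset (Finset.filter_subset _ _)
    intro i _ hi
    have : h i w ≤ 0 := by simpa using hi
    rw [max_eq_left this, mul_zero, zero_smul]
  obtain ⟨t, ht, μ, hμ, htLI, hsum⟩ := aux_carath G (Finset.univ.filter (fun i => 0 < h i w))
    (fun i => ρ * max 0 (h i w)) (fun i _ => mul_nonneg hρ (le_max_left _ _))
  rw [hst'] at hsum
  set N := ‖y - w‖ with hN
  have hN0 : 0 ≤ N := norm_nonneg _
  have hcoord : ∀ j, |y j - w j| ≤ N := fun j => norm_le_pi_norm (y - w) j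
  have hLn : ‖L‖ ≤ m * N := by
    apply ContinuousLinearMap.opNorm_le_bound _ (by positivity)
    intro u
    rw [hLapp, Real.norm_eq_abs]
    calc |∑ j, (y j - w j) * u j| ≤ ∑ j, |(y j - w j) * u j| := Finset.abs_sum_le_sum_abs _ _
      _ ≤ ∑ j : Fin m, N * ‖u‖ := by
        apply Finset.sum_le_sum
        intro j _
        rw [abs_mul]
        exact mul_le_mul (hcoord j) (norm_le_pi_norm u j) (abs_nonneg _) hN0
      _ = _ := by simp; ring
  have hsq : N ^ 2 ≤ L (y - w) := by
    rw [hLapp]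
    have h0 : 0 ≤ ∑ j, (y j - w j) * (y - w) j :=
      Finset.sum_nonneg fun j _ => by simp only [Pi.sub_apply]; exact mul_self_nonneg _
    have : N ≤ Real.sqrt (∑ j, (y j - w j) * (y - w) j) := by
      rw [hN, pi_norm_le_iff_of_nonneg (Real.sqrt_nonneg _)]
      intro j
      apply Real.le_sqrt_of_sq_le
      have := Finset.single_le_sum (f := fun j => (y j - w j) * (y - w) j)
        (fun j _ => by simp only [Pi.sub_apply]; exact mul_self_nonneg _) (Finset.mem_univ j)
      simp only [Pi.sub_apply, Real.norm_eq_abs, sq_abs] at this ⊢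
      nlinarith
    calc N ^ 2 ≤ (Real.sqrt (∑ j, (y j - w j) * (y - w) j)) ^ 2 := by gcongr
      _ = _ := Real.sq_sqrt h0
  have hμs : ∑ i ∈ t, |μ i| ≤ C * (m * N) := by
    refine (hLI t htLI μ).trans ?_
    rw [hsum]
    gcongr
  have hup : L (y - w) ≤ (∑ i ∈ t, |μ i|) * (M + η * N) := by
    rw [← hsum, Finset.sum_mul]
    simp only [_root_.smul_apply, _root_.sum_apply, smul_eq_mul]
    apply Finset.sum_le_sum
    intro i hi
    rw [abs_of_nonneg (hμ i hi)]
    apply mul_le_mul_of_nonneg_left _ (hμ i hi)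
    have h1 : 0 < h i w := by simpa using ht hi
    have h2 := (abs_le.mp (hlin i)).1
    have h3 := hy i
    linarith
  have hfin : N ^ 2 ≤ C * (m * N) * (M + η * N) :=
    hsq.trans (hup.trans (mul_le_mul_of_nonneg_right hμs (by positivity)))
  rcases hN0.eq_or_lt with h0 | h0
  · rw [← h0]; positivity
  · have : N ≤ C * m * (M + η * N) := by
      apply le_of_mul_le_mul_right _ h0
      nlinarith
    have h5 := mul_le_mul_of_nonneg_right hη hN0
    nlinarith

lemma aux_fixed {m : ℕ} {ι : Type*} [Fintype ι] (h : ι → (Fin m → ℝ) → ℝ)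
    (G : (Fin m → ℝ) → ι → (Fin m → ℝ) →L[ℝ] ℝ) (yb y y' : Fin m → ℝ) (C η M r ε : ℝ) (hC : 0 < C)
    (hM : 0 ≤ M) (hη0 : 0 ≤ η) (hr : 0 < r) (hε : 0 < ε) (hεr : 4 * (m + 2) * ε ≤ r)
    (hη : C * m * η ≤ 1 / 2)
    (hcont : ∀ i, Continuous (h i))
    (hd : ∀ w ∈ Metric.ball yb r, ∀ i, HasFDerivAt (h i) (G w i) w)
    (hLI : ∀ w ∈ Metric.ball yb r, ∀ J : Finset ι, LinearIndependent ℝ (fun i : J => G w i) →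
      ∀ l : ι → ℝ, ∑ i ∈ J, |l i| ≤ C * ‖∑ i ∈ J, l i • G w i‖)
    (hlin : ∀ w ∈ Metric.ball yb r, ∀ u ∈ Metric.ball yb r, ∀ i,
      |h i u - h i w - G w i (u - w)| ≤ η * ‖u - w‖)
    (hyb : dist y yb < ε) (hyb' : dist y' yb < ε) (hy' : ∀ i, h i y' ≤ 0)
    (hy : ∀ i, h i y ≤ M) :
    ∃ w ∈ Metric.ball yb r, (∀ i, h i w ≤ 0) ∧ dist y w ≤ 2 * C * m * M := by
  have hεr' : 4 * ε ≤ r := by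
    have : (0:ℝ) ≤ m := Nat.cast_nonneg m
    nlinarith
  have hmε : (0:ℝ) ≤ m * ε := by positivity
  have hyy : ‖y' - y‖ ≤ 2 * ε := by
    rw [← dist_eq_norm]
    have := dist_triangle_right y' y yb
    linarith
  set Q : ℝ := ∑ j, (y' j - y j) ^ 2 with hQ
  have hQle : Q ≤ ((m + 1) * (2 * ε)) ^ 2 := by
    calc Q ≤ ∑ j : Fin m, (2 * ε) ^ 2 := by
          apply Finset.sum_le_sum
          intro j _
          rw [← sq_abs]
          have := norm_le_pi_norm (y' - y) j
          simp only [Pi.sub_apply, Real.norm_eq_abs] at this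
          gcongr
          linarith
      _ = m * (2 * ε) ^ 2 := by simp
      _ ≤ _ := by
        have : (0:ℝ) ≤ m := Nat.cast_nonneg m
        rw [mul_pow ((m : ℝ) + 1)]
        apply mul_le_mul_of_nonneg_right _ (sq_nonneg _)
        nlinarith
  have key : ∀ k : ℕ, ∃ w ∈ Metric.closedBall yb (r * (3 / 4)), dist y w ≤ 2 * C * m * M ∧
      ∀ i, (k : ℝ) * (max 0 (h i w)) ^ 2 ≤ Q := by
    intro k
    set P : (Fin m → ℝ) → ℝ := fun w => ∑ j, (w j - y j) ^ 2 + (k : ℝ) * ∑ i, (max 0 (h i w)) ^ 2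
      with hP
    have hPc : Continuous P := by
      have := hcont
      fun_prop
    have hy'B : y' ∈ Metric.closedBall yb (r * (3 / 4)) := by
      rw [Metric.mem_closedBall]; linarith
    obtain ⟨w, hwB, hwmin⟩ := (isCompact_closedBall yb (r * (3 / 4))).exists_isMinOn ⟨y', hy'B⟩
      hPc.continuousOn
    have hPw : P w ≤ Q := by
      have h1 : P w ≤ P y' := hwmin hy'B
      have h2 : P y' = Q := by
        simp only [hP, hQ]
        simp [max_eq_left (hy' _)]
      linarith
    have hs1 : 0 ≤ ∑ j, (w j - y j) ^ 2 := Finset.sum_nonneg fun _ _ => sq_nonneg _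
    have hs2 : 0 ≤ (k : ℝ) * ∑ i, (max 0 (h i w)) ^ 2 :=
      mul_nonneg (Nat.cast_nonneg k) (Finset.sum_nonneg fun _ _ => sq_nonneg _)
    have hwy : dist w y ≤ (m + 1) * (2 * ε) := by
      rw [dist_pi_le_iff (by positivity)]
      intro j
      rw [Real.dist_eq]
      apply abs_le_of_sq_le_sq _ (by positivity)
      have h1 : (w j - y j) ^ 2 ≤ ∑ j, (w j - y j) ^ 2 :=
        Finset.single_le_sum (f := fun j => (w j - y j) ^ 2) (fun _ _ => sq_nonneg _)
          (Finset.mem_univ j)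
      simp only [hP] at hPw
      linarith
    have hwyb : dist w yb < r * (3 / 4) := by
      have := dist_triangle w y yb
      linarith
    have hwr : w ∈ Metric.ball yb r := by rw [Metric.mem_ball]; linarith
    have hyr : y ∈ Metric.ball yb r := by rw [Metric.mem_ball]; linarith
    refine ⟨w, hwB, ?_, ?_⟩
    · rw [dist_eq_norm]
      refine aux_core h (G w) y w C η M k hC (Nat.cast_nonneg k) hM hη0 hη (hd w hwr) ?_
        (hLI w hwr) (hlin w hwr y hyr) hy
      exact hwmin.isLocalMin (Metric.closedBall_mem_nhds_of_mem hwyb)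
    · intro i
      have h1 : (max 0 (h i w)) ^ 2 ≤ ∑ i, (max 0 (h i w)) ^ 2 :=
        Finset.single_le_sum (f := fun i => (max 0 (h i w)) ^ 2) (fun _ _ => sq_nonneg _)
          (Finset.mem_univ i)
      have h2 := mul_le_mul_of_nonneg_left h1 (Nat.cast_nonneg (α := ℝ) k)
      simp only [hP] at hPw
      linarith
  choose w hwB hwd hwk using key
  obtain ⟨ws, hws, σ, hσ, hlim⟩ := (isCompact_closedBall yb (r * (3 / 4))).tendsto_subseq hwB
  refine ⟨ws, ?_, ?_, ?_⟩
  · rw [Metric.mem_closedBall] at hws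
    rw [Metric.mem_ball]; linarith
  · intro i
    by_contra hpos
    push Not at hpos
    have h1 : Tendsto (fun k => (max 0 (h i (w (σ k)))) ^ 2) atTop (𝓝 ((max 0 (h i ws)) ^ 2)) := by
      have : Continuous fun z => (max 0 (h i z)) ^ 2 := by
        have := hcont
        fun_prop
      exact (this.tendsto ws).comp hlim
    have h2 : Tendsto (fun k => (σ k : ℝ)) atTop atTop :=
      tendsto_natCast_atTop_atTop.comp hσ.tendsto_atTop
    have h3 := h2.atTop_mul_pos (C := (max 0 (h i ws)) ^ 2) (by rw [max_eq_right hpos.le]; positivity) h1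
    obtain ⟨k, hk⟩ := (h3.eventually_gt_atTop Q).exists
    exact absurd (hwk (σ k) i) (not_le.mpr hk)
  · exact le_of_tendsto (tendsto_const_nhds.dist hlim) (Eventually.of_forall fun k => hwd (σ k))

/-- Lemma 3.6: inner semicontinuity of `S`, local Lipschitz continuity and continuous
differentiability w.r.t. `y` of the data, and a local constant rank condition on the
families of `y`-gradients indexed by subsets of `I(x̄,ȳ) ∪ {0}` imply RRCQ at `(x̄,ȳ)`. -/
theorem crcq_isc_implies_rrcq {n m q : ℕ}
    (f : (Fin n → ℝ) → (Fin m → ℝ) → ℝ) (g : (Fin n → ℝ) → (Fin m → ℝ) → Fin q → ℝ)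
    (hf : Continuous fun p : (Fin n → ℝ) × (Fin m → ℝ) => f p.1 p.2)
    (hg : Continuous fun p : (Fin n → ℝ) × (Fin m → ℝ) => fun i => g p.1 p.2 i)
    (xb : Fin n → ℝ) (yb : Fin m → ℝ)
    (hgph : yb ∈ Sol f g xb)
    (hisc : InnerSemicontinuous (Sol f g) xb yb)
    (hLip : ∃ K : ℝ≥0, ∃ V ∈ 𝓝 ((xb, yb) : (Fin n → ℝ) × (Fin m → ℝ)),
      LipschitzOnWith K (fun p : (Fin n → ℝ) × (Fin m → ℝ) => f p.1 p.2) V ∧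
      ∀ i, LipschitzOnWith K (fun p : (Fin n → ℝ) × (Fin m → ℝ) => g p.1 p.2 i) V)
    (hC1 : ∃ V ∈ 𝓝 ((xb, yb) : (Fin n → ℝ) × (Fin m → ℝ)),
      (∀ p ∈ V, DifferentiableAt ℝ (f p.1) p.2 ∧
        ∀ i, DifferentiableAt ℝ (fun y => g p.1 y i) p.2) ∧
      ContinuousOn (fun p : (Fin n → ℝ) × (Fin m → ℝ) => fderiv ℝ (f p.1) p.2) V ∧
      ∀ i, ContinuousOn
        (fun p : (Fin n → ℝ) × (Fin m → ℝ) => fderiv ℝ (fun y => g p.1 y i) p.2) V)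
    (hCR : ∃ U ∈ 𝓝 ((xb, yb) : (Fin n → ℝ) × (Fin m → ℝ)),
      ∀ J : Set (Option (Fin q)),
        (∀ io ∈ J, ∀ j : Fin q, io = some j → g xb yb j = 0) →
        ∃ r : ℕ, ∀ p ∈ U,
          Module.finrank ℝ ↥(Submodule.span ℝ (yGrad f g p '' J)) = r) :
    RRCQ f g xb yb := by
  classical
  obtain ⟨V, hV, hVd, hVf, hVg⟩ := hC1
  obtain ⟨U, hU, hUr⟩ := hCR
  let ι := {io : Option (Fin q) // ∀ j : Fin q, io = some j → g xb yb j = 0}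
  let H : Option (Fin q) → (Fin n → ℝ) → (Fin m → ℝ) → ℝ := fun io x y =>
    io.elim (f x y) (fun j => g x y j)
  have hVG : ∀ io, ContinuousOn (fun p => yGrad f g p io) V := by
    intro io
    cases io with
    | none => exact hVf
    | some j => exact hVg j
  have hVH : ∀ p ∈ V, ∀ io, HasFDerivAt (H io p.1) (yGrad f g p io) p.2 := by
    intro p hp io
    cases io with
    | none => exact (hVd p hp).1.hasFDerivAt
    | some j => exact ((hVd p hp).2 j).hasFDerivAt
  have hHc : ∀ io, Continuous fun p : (Fin n → ℝ) × (Fin m → ℝ) => H io p.1 p.2 := by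
    intro io
    cases io with
    | none => exact hf
    | some j => exact (continuous_apply j).comp hg
  obtain ⟨C, hC, hCb⟩ := aux_bound2 (fun i : ι => yGrad f g (xb, yb) i.1)
  -- linear independence transfers to the base point
  have hLItr : ∀ p ∈ U, ∀ J : Finset ι, LinearIndependent ℝ (fun i : J => yGrad f g p i.1.1) →
      LinearIndependent ℝ (fun i : J => yGrad f g (xb, yb) i.1.1) := by
    intro p hp J hJ
    obtain ⟨k, hk⟩ := hUr (Subtype.val '' (J : Set ι)) (by
      rintro io ⟨i, _, rfl⟩
      exact i.2)
    have himg : ∀ p, yGrad f g p '' (Subtype.val '' (J : Set ι)) =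
        Set.range (fun i : J => yGrad f g p i.1.1) := by
      intro p
      ext z
      simp only [Set.mem_image, Set.mem_range]
      constructor
      · rintro ⟨_, ⟨i, hi, rfl⟩, rfl⟩
        exact ⟨⟨i, hi⟩, rfl⟩
      · rintro ⟨i, rfl⟩
        exact ⟨i.1.1, ⟨i.1, i.2, rfl⟩, rfl⟩
    rw [linearIndependent_iff_card_eq_finrank_span] at hJ ⊢
    rw [hJ, Set.finrank, Set.finrank, ← himg, ← himg, hk p hp, hk _ (mem_of_mem_nhds hU)]
  -- constants
  set δ : ℝ := 1 / (8 * C * (m + 1)) with hδ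
  have hδ0 : 0 < δ := by positivity
  have hm0 : (0 : ℝ) ≤ m := Nat.cast_nonneg m
  have hCδ : C * δ * (m + 1) = 1 / 8 := by rw [hδ]; field_simp
  have hCδ1 : C * δ ≤ 1 / 2 := by
    have : 0 ≤ C * δ * m := by positivity
    linarith
  have hev : ∀ᶠ p in 𝓝 (xb, yb), p ∈ U ∧ p ∈ V ∧
      (∀ io, ‖yGrad f g p io - yGrad f g (xb, yb) io‖ < δ) ∧
      ∀ j, g xb yb j < 0 → g p.1 p.2 j < 0 := by
    refine Filter.Eventually.and hU (Filter.Eventually.and hV (Filter.Eventually.and ?_ ?_))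
    · rw [Filter.eventually_all]
      intro io
      have h1 : ContinuousAt (fun p => yGrad f g p io) (xb, yb) := (hVG io).continuousAt hV
      have h2 := h1 (Metric.ball_mem_nhds _ hδ0)
      filter_upwards [h2] with p hp
      simpa [dist_eq_norm] using hp
    · rw [Filter.eventually_all]
      intro j
      by_cases hj : g xb yb j < 0
      · have h1 : ContinuousAt (fun p : (Fin n → ℝ) × (Fin m → ℝ) => H (some j) p.1 p.2) (xb, yb) :=
          (hHc (some j)).continuousAt
        have h2 := h1.eventually_lt_const (u := 0) hj
        filter_upwards [h2] with p hp _
        exact hp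
      · exact Eventually.of_forall fun p h => absurd h hj
  obtain ⟨r, hr, hball⟩ := Metric.eventually_nhds_iff_ball.mp hev
  have hmem : ∀ x y, dist x xb < r → dist y yb < r → (x, y) ∈ Metric.ball (xb, yb) r := by
    intro x y hx hy
    rw [Metric.mem_ball, Prod.dist_eq]
    exact max_lt hx hy
  set ε : ℝ := r / (4 * (m + 2)) with hε
  have hε0 : 0 < ε := by positivity
  have hεr : 4 * (m + 2) * ε = r := by rw [hε]; field_simp
  have hεr' : ε < r := by
    have : 0 ≤ m * ε := by positivity
    linarith
  obtain ⟨ε', hε'0, hisc'⟩ := Metric.eventually_nhds_iff.mp (aux_isc _ xb yb hisc ε hε0)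
  refine ⟨2 * (2 * C) * m + 1, by positivity, min ε ε', lt_min hε0 hε'0, ?_⟩
  intro x y hx hy _
  obtain ⟨y', hy'S, hy'd⟩ := hisc' (lt_of_lt_of_le hx (min_le_right _ _))
  have hxr : dist x xb < r := (lt_of_lt_of_le hx (min_le_left _ _)).trans hεr'
  have hyε : dist y yb < ε := lt_of_lt_of_le hy (min_le_left _ _)
  rw [aux_phi f g x y' hy'S]
  set M := max (max 0 (f x y - f x y')) (Finset.univ.fold max 0 fun i => g x y i) with hMdef
  have hM0 : 0 ≤ M := (le_max_left _ _).trans (le_max_left _ _)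
  let h : ι → (Fin m → ℝ) → ℝ := fun i w => H i.1 x w - i.1.elim (f x y') (fun _ => 0)
  have hw := aux_fixed h (fun w i => yGrad f g (x, w) i.1) yb y y' (2 * C) (2 * δ) M r ε
    (by positivity) hM0 (by positivity) hr hε0 hεr.le (by nlinarith)
    (by
      intro i
      have h1 := (hHc i.1).comp (Continuous.prodMk_right x)
      exact h1.sub continuous_const)
    (by
      intro w hw i
      have h1 := (hball _ (hmem x w hxr hw)).2.1
      exact (hVH _ h1 i.1).sub_const _)
    (by
      intro w hw J hJ l
      have h1 := hball _ (hmem x w hxr hw)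
      exact aux_bound3 _ _ J C δ hC hCδ1 (fun i => (h1.2.2.1 i.1).le) l
        (hCb J (hLItr _ h1.1 J hJ) l))
    (by
      intro w hw u hu i
      have h1 := Convex.norm_image_sub_le_of_norm_hasFDerivWithin_le' (f := h i)
        (f' := fun z => yGrad f g (x, z) i.1) (φ := yGrad f g (x, w) i.1) (C := 2 * δ)
        (s := Metric.ball yb r) (x := w) (y := u)
        (fun z hz => ((hVH _ (hball _ (hmem x z hxr hz)).2.1 i.1).sub_const _).hasFDerivWithinAt)
        (fun z hz => by
          have h2 := (hball _ (hmem x z hxr hz)).2.2.1 i.1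
          have h3 := (hball _ (hmem x w hxr hw)).2.2.1 i.1
          rw [← dist_eq_norm] at h2 h3 ⊢
          have := dist_triangle_right (yGrad f g (x, z) i.1) (yGrad f g (x, w) i.1)
            (yGrad f g (xb, yb) i.1)
          linarith)
        (convex_ball yb r) hw hu
      exact h1)
    hyε hy'd
    (by
      rintro ⟨io, hio⟩
      cases io with
      | none => simp [h, H]
      | some j => simpa [h, H] using hy'S.1 j)
    (by
      rintro ⟨io, hio⟩
      cases io with
      | none =>
        simp only [h, H, Option.elim]
        exact (le_max_right _ _).trans (le_max_left _ _)
      | some j =>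
        simp only [h, H, Option.elim, sub_zero]
        refine le_trans ?_ (le_max_right _ _)
        rw [Finset.le_fold_max]
        exact Or.inr ⟨j, Finset.mem_univ j, le_rfl⟩)
  obtain ⟨w, hwr, hwh, hwd⟩ := hw
  have hwS : w ∈ Sol f g x := by
    refine ⟨fun j => ?_, fun z hz => ?_⟩
    · rcases (hgph.1 j).lt_or_eq with hj | hj
      · exact ((hball _ (hmem x w hxr hwr)).2.2.2 j hj).le
      · have := hwh ⟨some j, by rintro j' h'; cases h'; exact hj⟩
        simpa [h, H] using this
    · have := hwh ⟨none, by rintro j' h'; cases h'⟩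
      simp only [h, H, Option.elim] at this
      have := hy'S.2 z hz
      linarith
  calc Metric.infDist y (Sol f g x) ≤ dist y w := Metric.infDist_le_dist_of_mem hwS
    _ ≤ 2 * (2 * C) * m * M := hwd
    _ ≤ _ := by nlinarith
end

section
/- Let c ∈ ℝᵐ, B ∈ ℝ^{q×m}, a ∈ ℝ^q and D ∈ ℝ^{q×n} be fixed and let S(x) = argmin_y { cᵀy | a + Dx + By ≤ 0 }. Then for every (x̄,ȳ) ∈ gph S with x̄ in the interior of dom S = { x | S(x) ≠ ∅ }, the map S is inner semicontinuous at (x̄,ȳ) and the R-regularity constraint qualification (RRCQ) holds at (x̄,ȳ). -/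
open Filter Topology
open scoped ENNReal NNReal

/-- Finite interval intersection with quantitative control. -/
theorem exists_between_bounded {ι : Type} [Fintype ι] (P N : ι → Prop) (u l : ι → ℝ) (M : ℝ)
    (hM : 0 ≤ M) (hu : ∀ i, P i → -M ≤ u i) (hl : ∀ i, N i → l i ≤ M)
    (hlu : ∀ i j, P i → N j → l j ≤ u i) :
    ∃ z : ℝ, |z| ≤ M ∧ (∀ i, P i → z ≤ u i) ∧ (∀ i, N i → l i ≤ z) := by
  classical
  let s : Finset ℝ := insert (-M) ((Finset.univ.filter N).image l)
  have hs : s.Nonempty := ⟨-M, by simp [s]⟩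
  have hmem := s.max'_mem hs
  have h1 : -M ≤ s.max' hs := s.le_max' _ (by simp [s])
  refine ⟨s.max' hs, ?_, ?_, ?_⟩
  · rw [abs_le]
    refine ⟨h1, s.max'_le hs _ ?_⟩
    intro y hy
    simp only [s, Finset.mem_insert, Finset.mem_image, Finset.mem_filter, Finset.mem_univ,
      true_and] at hy
    rcases hy with rfl | ⟨j, hj, rfl⟩
    · linarith
    · exact hl j hj
  · intro i hi
    refine s.max'_le hs _ ?_
    intro y hy
    simp only [s, Finset.mem_insert, Finset.mem_image, Finset.mem_filter, Finset.mem_univ,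
      true_and] at hy
    rcases hy with rfl | ⟨j, hj, rfl⟩
    · exact hu i hi
    · exact hlu i j hi hj
  · intro i hi
    refine s.le_max' _ ?_
    simp only [s, Finset.mem_insert, Finset.mem_image, Finset.mem_filter, Finset.mem_univ,
      true_and]
    exact Or.inr ⟨i, hi, rfl⟩

theorem abs_sum_mul_le {m : ℕ} (v z : Fin m → ℝ) (R : ℝ) (hz : ∀ j, |z j| ≤ R) :
    |∑ j, v j * z j| ≤ (∑ j, |v j|) * R := by
  refine (Finset.abs_sum_le_sum_abs _ _).trans ?_
  rw [Finset.sum_mul]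
  refine Finset.sum_le_sum fun j _ => ?_
  rw [abs_mul]
  exact mul_le_mul_of_nonneg_left (hz j) (abs_nonneg _)

/-- Hoffman's bound at the origin, by Fourier-Motzkin elimination. -/
theorem hoffman_zero (m : ℕ) : ∀ (ι : Type) [Fintype ι] (A : ι → Fin m → ℝ),
    ∃ κ : ℝ, 0 ≤ κ ∧ ∀ (b : ι → ℝ) (t : ℝ), 0 ≤ t → (∀ i, -t ≤ b i) →
      (∃ y : Fin m → ℝ, ∀ i, ∑ j, A i j * y j ≤ b i) →
      ∃ z : Fin m → ℝ, (∀ i, ∑ j, A i j * z j ≤ b i) ∧ ∀ j, |z j| ≤ κ * t := by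
  classical
  induction m with
  | zero =>
    intro ι _ A
    exact ⟨0, le_rfl, fun b t ht hb ⟨y, hy⟩ => ⟨y, hy, fun j => j.elim0⟩⟩
  | succ m ih =>
    intro ι _ A
    let fi : ι ⊕ ι × ι → ι := Sum.elim id Prod.fst
    let fj : ι ⊕ ι × ι → ι := Sum.elim id Prod.snd
    let α : ι ⊕ ι × ι → ℝ := Sum.elim (fun i => if A i 0 = 0 then 1 else 0)
      (fun p => if 0 < A p.1 0 ∧ A p.2 0 < 0 then - A p.2 0 else 0)
    let β : ι ⊕ ι × ι → ℝ := Sum.elim (fun i => 0)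
      (fun p => if 0 < A p.1 0 ∧ A p.2 0 < 0 then A p.1 0 else 0)
    have hα : ∀ k, 0 ≤ α k := by
      rintro (i | p)
      · simp only [α, Sum.elim_inl]; split_ifs <;> norm_num
      · simp only [α, Sum.elim_inr]; split_ifs with h
        · linarith [h.2]
        · exact le_rfl
    have hβ : ∀ k, 0 ≤ β k := by
      rintro (i | p)
      · simp [β]
      · simp only [β, Sum.elim_inr]; split_ifs with h
        · exact h.1.le
        · exact le_rfl
    have hab : ∀ k, α k * A (fi k) 0 + β k * A (fj k) 0 = 0 := by
      rintro (i | p)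
      · simp only [α, β, fi, fj, Sum.elim_inl, id]; split_ifs with h
        · simp [h]
        · simp
      · simp only [α, β, fi, fj, Sum.elim_inr]; split_ifs with h <;> ring
    obtain ⟨κ, hκ, H⟩ := ih (ι ⊕ ι × ι)
      (fun k j => α k * A (fi k) j.succ + β k * A (fj k) j.succ)
    have hsum : ∀ (k) (y : Fin m → ℝ),
        ∑ j, (α k * A (fi k) j.succ + β k * A (fj k) j.succ) * y j
          = α k * ∑ j, A (fi k) j.succ * y j + β k * ∑ j, A (fj k) j.succ * y j := by
      intro k y
      rw [Finset.mul_sum, Finset.mul_sum, ← Finset.sum_add_distrib]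
      exact Finset.sum_congr rfl fun j _ => by ring
    let C : ℝ := ∑ k, (α k + β k)
    have hC : 0 ≤ C := Finset.sum_nonneg fun k _ => add_nonneg (hα k) (hβ k)
    have hCk : ∀ k, α k + β k ≤ C := fun k =>
      Finset.single_le_sum (f := fun k => α k + β k)
        (fun k _ => add_nonneg (hα k) (hβ k)) (Finset.mem_univ k)
    let E : ι → ℝ := fun i => ((∑ j : Fin m, |A i j.succ|) * (κ * C) + 1) / |A i 0|
    have hE : ∀ i, 0 ≤ E i := fun i => div_nonneg (add_nonneg (mul_nonneg
      (Finset.sum_nonneg fun j _ => abs_nonneg _) (mul_nonneg hκ hC)) zero_le_one) (abs_nonneg _)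
    let C2 : ℝ := ∑ i, E i
    have hC2 : 0 ≤ C2 := Finset.sum_nonneg fun i _ => hE i
    have hC2i : ∀ i, E i ≤ C2 := fun i =>
      Finset.single_le_sum (f := E) (fun i _ => hE i) (Finset.mem_univ i)
    refine ⟨max (κ * C) C2, le_max_of_le_right hC2, ?_⟩
    intro b t ht hb ⟨y, hy⟩
    obtain ⟨z, hz, hzb⟩ := H (fun k => α k * b (fi k) + β k * b (fj k)) (C * t)
      (mul_nonneg hC ht)
      (by
        intro k
        have h1 := mul_le_mul_of_nonneg_left (hb (fi k)) (hα k)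
        have h2 := mul_le_mul_of_nonneg_left (hb (fj k)) (hβ k)
        have h3 := mul_le_mul_of_nonneg_right (hCk k) ht
        nlinarith)
      ⟨fun j => y j.succ, by
        intro k
        rw [hsum]
        have h1 := mul_le_mul_of_nonneg_left (hy (fi k)) (hα k)
        have h2 := mul_le_mul_of_nonneg_left (hy (fj k)) (hβ k)
        rw [Fin.sum_univ_succ] at h1 h2
        have h3 := hab k
        have h4 : (α k * A (fi k) 0 + β k * A (fj k) 0) * y 0 = 0 := by rw [h3, zero_mul]
        nlinarith⟩
    simp only [hsum] at hz
    let s : ι → ℝ := fun i => ∑ j, A i j.succ * z j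
    have hs : ∀ i, |s i| + t ≤ |A i 0| * (C2 * t) ∨ A i 0 = 0 := by
      intro i
      by_cases h0 : A i 0 = 0
      · exact Or.inr h0
      left
      have hp : 0 < |A i 0| := abs_pos.mpr h0
      have h1 : |s i| ≤ _ := abs_sum_mul_le (fun j => A i j.succ) z _ hzb
      have h2 : |A i 0| * E i = (∑ j : Fin m, |A i j.succ|) * (κ * C) + 1 :=
        mul_div_cancel₀ _ hp.ne'
      have h3 : |A i 0| * E i * t ≤ |A i 0| * C2 * t :=
        mul_le_mul_of_nonneg_right (mul_le_mul_of_nonneg_left (hC2i i) hp.le) ht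
      rw [h2] at h3
      nlinarith
    obtain ⟨w, hw, hwu, hwl⟩ := exists_between_bounded (fun i => 0 < A i 0) (fun i => A i 0 < 0)
      (fun i => (b i - s i) / A i 0) (fun i => (b i - s i) / A i 0) (C2 * t) (mul_nonneg hC2 ht)
      (by
        intro i hi
        rw [le_div_iff₀ hi]
        rcases hs i with h | h
        · rw [abs_of_pos hi] at h
          have := le_abs_self (s i)
          have := hb i
          nlinarith
        · exact absurd h hi.ne')
      (by
        intro i hi
        rw [div_le_iff_of_neg hi]
        rcases hs i with h | h
        · rw [abs_of_neg hi] at h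
          have := le_abs_self (s i)
          have := hb i
          nlinarith
        · exact absurd h hi.ne)
      (by
        intro i j hi hj
        have h := hz (Sum.inr (i, j))
        simp only [α, β, fi, fj, Sum.elim_inr, hi, hj, and_self, if_true] at h
        change -A j 0 * s i + A i 0 * s j ≤ _ at h
        rw [le_div_iff₀ hi, div_mul_eq_mul_div, div_le_iff_of_neg hj]
        nlinarith)
    refine ⟨Fin.cons w z, ?_, ?_⟩
    · intro i
      rw [Fin.sum_univ_succ]
      simp only [Fin.cons_zero, Fin.cons_succ]
      change A i 0 * w + s i ≤ b i
      rcases lt_trichotomy (A i 0) 0 with h | h | h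
      · have := hwl i h
        rw [div_le_iff_of_neg h] at this
        linarith
      · have h' := hz (Sum.inl i)
        simp only [α, β, fi, fj, Sum.elim_inl, h, if_true, id, one_mul, zero_mul, add_zero] at h'
        rw [h, zero_mul, zero_add]
        exact h'
      · have := hwu i h
        rw [le_div_iff₀ h] at this
        linarith
    · intro j
      refine Fin.cases ?_ (fun j => ?_) j
      · simp only [Fin.cons_zero]
        exact hw.trans (mul_le_mul_of_nonneg_right (le_max_right _ _) ht)
      · simp only [Fin.cons_succ]
        refine (hzb j).trans ?_
        rw [← mul_assoc]
        exact mul_le_mul_of_nonneg_right (le_max_left _ _) ht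

/-- Hoffman's bound. -/
theorem hoffman {m : ℕ} {ι : Type} [Fintype ι] (A : ι → Fin m → ℝ) :
    ∃ κ : ℝ, 0 ≤ κ ∧ ∀ (b : ι → ℝ) (y0 : Fin m → ℝ) (t : ℝ), 0 ≤ t →
      (∀ i, ∑ j, A i j * y0 j ≤ b i + t) →
      (∃ y : Fin m → ℝ, ∀ i, ∑ j, A i j * y j ≤ b i) →
      ∃ z : Fin m → ℝ, (∀ i, ∑ j, A i j * z j ≤ b i) ∧ dist y0 z ≤ κ * t := by
  obtain ⟨κ, hκ, H⟩ := hoffman_zero m ι A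
  refine ⟨κ, hκ, fun b y0 t ht h ⟨y, hy⟩ => ?_⟩
  obtain ⟨z, hz, hzb⟩ := H (fun i => b i - ∑ j, A i j * y0 j) t ht
    (fun i => by linarith [h i])
    ⟨fun j => y j - y0 j, fun i => by
      simp only [mul_sub, Finset.sum_sub_distrib]; linarith [hy i]⟩
  refine ⟨fun j => y0 j + z j, fun i => ?_, ?_⟩
  · simp only [mul_add, Finset.sum_add_distrib]; linarith [hz i]
  · rw [dist_pi_le_iff (mul_nonneg hκ ht)]
    intro j
    rw [Real.dist_eq]
    simpa using hzb j

/-- At a solution, the optimal value is attained. -/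
theorem phi_eq_of_mem_Sol {n m q : ℕ} (f : (Fin n → ℝ) → (Fin m → ℝ) → ℝ)
    (g : (Fin n → ℝ) → (Fin m → ℝ) → Fin q → ℝ) (x : Fin n → ℝ) (y : Fin m → ℝ)
    (hy : y ∈ Sol f g x) : phi f g x = ((f x y : ℝ) : EReal) := by
  apply le_antisymm
  · exact sInf_le ⟨y, hy.1, rfl⟩
  · refine le_sInf ?_
    rintro v ⟨z, hz, rfl⟩
    exact EReal.coe_le_coe_iff.mpr (hy.2 z hz)

/-- Remark 4.4: for a fully linear lower level problem `min_y { cᵀy | a + Dx + By ≤ 0 }`,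
the solution map `S` is inner semicontinuous and RRCQ holds at every point `(x̄,ȳ)` of its
graph with `x̄` in the interior of `dom S`. -/
theorem isc_and_rrcq_fully_linear {n m q : ℕ}
    (c : Fin m → ℝ) (B : Fin q → Fin m → ℝ) (a : Fin q → ℝ) (D : Fin q → Fin n → ℝ) :
    ∀ (xb : Fin n → ℝ) (yb : Fin m → ℝ),
      yb ∈ Sol (fun _ y => ∑ j, c j * y j)
        (fun x y i => a i + (∑ j, D i j * x j) + ∑ j, B i j * y j) xb →
      xb ∈ interior {x : Fin n → ℝ |
        (Sol (fun _ y => ∑ j, c j * y j)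
          (fun x y i => a i + (∑ j, D i j * x j) + ∑ j, B i j * y j) x).Nonempty} →
      InnerSemicontinuous
        (Sol (fun _ y => ∑ j, c j * y j)
          (fun x y i => a i + (∑ j, D i j * x j) + ∑ j, B i j * y j)) xb yb ∧
      RRCQ (fun _ y => ∑ j, c j * y j)
        (fun x y i => a i + (∑ j, D i j * x j) + ∑ j, B i j * y j) xb yb := by
  intro xb yb hyb hxb
  obtain ⟨κ, hκ, H⟩ := hoffman (ι := Option (Fin q)) (fun o => o.elim c B)
  obtain ⟨κ₁, hκ₁, H₁⟩ := hoffman B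
  set f : (Fin n → ℝ) → (Fin m → ℝ) → ℝ := fun _ y => ∑ j, c j * y j with hf
  set g : (Fin n → ℝ) → (Fin m → ℝ) → Fin q → ℝ :=
    fun x y i => a i + (∑ j, D i j * x j) + ∑ j, B i j * y j with hg
  -- error bound for the solution map
  have key : ∀ (x : Fin n → ℝ) (y ys : Fin m → ℝ) (t : ℝ), 0 ≤ t → ys ∈ Sol f g x →
      f x y - f x ys ≤ t → (∀ i, g x y i ≤ t) → ∃ z ∈ Sol f g x, dist y z ≤ κ * t := by
    intro x y ys t ht hys h1 h2
    obtain ⟨z, hz, hd⟩ := H (fun o => o.elim (f x ys) (fun i => - (a i + ∑ j, D i j * x j))) y t ht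
      (by
        rintro (_ | i)
        · change f x y ≤ f x ys + t
          linarith
        · change ∑ j, B i j * y j ≤ - (a i + ∑ j, D i j * x j) + t
          have := h2 i
          simp only [hg] at this
          linarith)
      ⟨ys, by
        rintro (_ | i)
        · exact le_refl (f x ys)
        · change ∑ j, B i j * ys j ≤ - (a i + ∑ j, D i j * x j)
          have := hys.1 i
          simp only [hg] at this
          linarith⟩
    refine ⟨z, ⟨fun i => ?_, fun w hw => ?_⟩, hd⟩
    · have : ∑ j, B i j * z j ≤ - (a i + ∑ j, D i j * x j) := hz (some i)
      simp only [hg]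
      linarith
    · have : f x z ≤ f x ys := hz none
      exact this.trans (hys.2 w hw)
  -- Lipschitz dependence on `x`
  let L : ℝ := ∑ i, ∑ j, |D i j|
  have hL : 0 ≤ L := Finset.sum_nonneg fun i _ => Finset.sum_nonneg fun j _ => abs_nonneg _
  have hD : ∀ x i, |(∑ j, D i j * x j) - ∑ j, D i j * xb j| ≤ L * dist x xb := by
    intro x i
    rw [← Finset.sum_sub_distrib]
    simp only [← mul_sub]
    refine (abs_sum_mul_le (D i) (fun j => x j - xb j) (dist x xb) (fun j => ?_)).trans ?_
    · rw [← Real.dist_eq]; exact dist_le_pi_dist x xb j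
    · exact mul_le_mul_of_nonneg_right (Finset.single_le_sum (f := fun i => ∑ j, |D i j|)
        (fun i _ => Finset.sum_nonneg fun j _ => abs_nonneg _) (Finset.mem_univ i)) dist_nonneg
  let K : ℝ := (∑ j, |c j|) * κ₁
  have hK : 0 ≤ K := mul_nonneg (Finset.sum_nonneg fun j _ => abs_nonneg _) hκ₁
  have lower : ∀ x y, (∀ i, g x y i ≤ 0) → f x yb - f x y ≤ K * (L * dist x xb) := by
    intro x y hy
    obtain ⟨z, hz, hd⟩ := H₁ (fun i => - (a i + ∑ j, D i j * xb j)) y (L * dist x xb)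
      (mul_nonneg hL dist_nonneg)
      (fun i => by
        have h1 := hy i
        simp only [hg] at h1
        have h2 := (abs_le.mp (hD x i)).1
        linarith)
      ⟨yb, fun i => by
        have h1 := hyb.1 i
        simp only [hg] at h1
        linarith⟩
    have h3 : f xb yb ≤ f xb z := hyb.2 z (fun i => by
      have h1 := hz i
      simp only [hg]
      linarith)
    have h4 := abs_sum_mul_le c (fun j => z j - y j) _ (fun j => by
      rw [← Real.dist_eq, dist_comm]
      exact (dist_le_pi_dist y z j).trans hd)
    simp only [mul_sub, Finset.sum_sub_distrib] at h4
    have h5 := (abs_le.mp h4).2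
    simp only [hf] at h3 ⊢
    have h6 : K * (L * dist x xb) = (∑ j, |c j|) * (κ₁ * (L * dist x xb)) := by
      simp only [K]; ring
    linarith
  have upper : ∀ x, (Sol f g x).Nonempty →
      ∃ z ∈ Sol f g x, dist yb z ≤ κ * ((K + 1) * (L * dist x xb)) := by
    rintro x ⟨ys, hys⟩
    have h0 : 0 ≤ L * dist x xb := mul_nonneg hL dist_nonneg
    have h1 : 0 ≤ K * (L * dist x xb) := mul_nonneg hK h0
    refine key x yb ys _ (by positivity) hys ?_ ?_
    · have := lower x ys hys.1
      linarith
    · intro i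
      have h2 := hyb.1 i
      have h3 := (abs_le.mp (hD x i)).2
      simp only [hg] at h2 ⊢
      linarith
  refine ⟨?_, ?_⟩
  · intro x hx
    classical
    have hev : ∀ᶠ k in atTop, (Sol f g (x k)).Nonempty :=
      hx.eventually (mem_interior_iff_mem_nhds.mp hxb)
    have hch : ∀ k, ∃ z, dist yb z ≤ κ * ((K + 1) * (L * dist (x k) xb)) ∧
        ((Sol f g (x k)).Nonempty → z ∈ Sol f g (x k)) := by
      intro k
      by_cases h : (Sol f g (x k)).Nonempty
      · obtain ⟨z, hz, hd⟩ := upper _ h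
        exact ⟨z, hd, fun _ => hz⟩
      · refine ⟨yb, ?_, fun h' => absurd h' h⟩
        rw [dist_self]
        positivity
    choose y hy1 hy2 using hch
    refine ⟨y, ?_, hev.mono fun k hk => hy2 k hk⟩
    rw [tendsto_iff_dist_tendsto_zero]
    refine squeeze_zero (fun _ => dist_nonneg) (fun k => (dist_comm (y k) yb).trans_le (hy1 k)) ?_
    have h0 := tendsto_iff_dist_tendsto_zero.mp hx
    have := ((h0.const_mul L).const_mul (K + 1)).const_mul κ
    simpa using this
  · refine ⟨κ + 1, by linarith, 1, one_pos, ?_⟩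
    rintro x y - - ⟨ys, hys⟩
    rw [phi_eq_of_mem_Sol f g x ys hys, EReal.toReal_coe]
    set t : ℝ := max (max 0 (f x y - f x ys)) (Finset.univ.fold max 0 fun i => g x y i) with ht
    have ht0 : 0 ≤ t := (le_max_left _ _).trans (le_max_left _ _)
    obtain ⟨z, hz, hd⟩ := key x y ys t ht0 hys ((le_max_right _ _).trans (le_max_left _ _))
      (fun i => le_trans ((Finset.le_fold_max _).mpr (Or.inr ⟨i, Finset.mem_univ i, le_rfl⟩))
        (le_max_right _ _))
    refine (Metric.infDist_le_dist_of_mem hz).trans (hd.trans ?_)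
    linarith
end
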